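/- Let p be a prime, d ≥ 3 an integer, a a nonzero rational, and b = σ·p^e with σ ∈ {1, −1} and e ≥ 0 an integer. Then the set PrePer(ψ_{d,a,b}, ℙ¹(ℚ)) of rational preperiodic points of ψ_{d,a,b} has at most 6 elements. -/

import Mathlib

/-- The map `ψ_{d,a,b} : ℙ¹(ℚ) → ℙ¹(ℚ)`, with `ℙ¹(ℚ)` modeled as `Option ℚ`
(`some z` is the affine point `z`, and `none` is the point at infinity `[1 : 0]`).
In homogeneous coordinates the map is `[X : Y] ↦ [X·Y^{d−1} : a·X^d + b·Y^d]`;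
on the affine chart it is `z ↦ z / (a·z^d + b)`, the point at infinity mapping to `0`. -/
def psi (d : ℕ) (a b : ℚ) : Option ℚ → Option ℚ
  | none => some 0
  | some z => if a * z ^ d + b = 0 then none else some (z / (a * z ^ d + b))

/-!
The values `y = a z ^ d + b` of the denominator along an orbit satisfy
`y' - b = (y - b) / y ^ d`, and the `y` along a cycle avoiding `0` and `∞` multiply to `1`.
For an absolute value with `1 ≤ v b`, an orbit on which `v y` ever exceeds `1` is trapped where
`a z ^ d` is small against `b`, so that `1 ≤ v y` from then on; around a cycle this forces
`v y = 1` throughout.  The primes other than `p` show that `|y|` is a power of `p`, and then the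
same argument at the real place gives `y = ± 1`.

If `y' = c` with `c ∈ {0, 1, -1}`, then writing `y = N / v` in lowest terms makes `N` divide `b`,
say `b = M N`, and the recurrence becomes the system `1 - M v = k N ^ (d - 1)`,
`c - M N = k v ^ (d - 1)`.  Since `M` and `N` are coprime and `M N` is a prime power, one of them
is a unit, and comparing sizes gives `y = c`.  Hence every preperiodic point is `∞`, `0`, or has
`y ∈ {0, 1, -1}`.  Each value of `y` is taken at most once for odd `d` and at most twice for
even `d`; in the latter case `1` and `-1` are not both taken, because `b ^ 2 - 1` is not a nonzero
square.
-/

section Periodicity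

theorem eq_of_monotone_of_periodic {α : Type*} [PartialOrder α] {f : ℕ → α} {n : ℕ}
    (hf : Monotone f) (hper : Function.Periodic f n) (hn : 0 < n) (i : ℕ) : f (i + 1) = f i :=
  le_antisymm ((hf (by lia)).trans_eq (hper i)) (hf i.le_succ)

theorem mem_of_iterate_mem_of_isPeriodicPt {α : Type*} {f : α → α} {S : Set α} {x : α} {n i : ℕ}
    (hS : Set.MapsTo f S S) (hx : Function.IsPeriodicPt f n x) (hn : 0 < n) (hi : f^[i] x ∈ S) :
    x ∈ S := by
  have hreturn : f^[i * n - i] (f^[i] x) = x := by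
    rw [← Function.iterate_add_apply, Nat.sub_add_cancel (Nat.le_mul_of_pos_right i hn)]
    exact hx.const_mul i
  exact hreturn ▸ hS.iterate _ hi

theorem mem_of_iterate_mem {α : Type*} {f : α → α} {S : Set α} (hS : ∀ x, f x ∈ S → x ∈ S)
    {x : α} : ∀ {m : ℕ}, f^[m] x ∈ S → x ∈ S
  | 0, h => h
  | _ + 1, h => hS x (mem_of_iterate_mem hS h)

end Periodicity

section Denominator

variable {K : Type*} [Field K]

/-- The denominator `a z ^ d + b` of `ψ_{d,a,b}` at the affine point `z`. Its values along an
orbit govern the dynamics. -/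
def psiDenom (d : ℕ) (a b z : K) : K := a * z ^ d + b

theorem lead_mul_psiDenom_pow {d : ℕ} {a b z z' : K} (h : z' * psiDenom d a b z = z) :
    a * z' ^ d * psiDenom d a b z ^ d = a * z ^ d := by
  rw [mul_assoc, ← mul_pow, h]

/-- `z` lists the affine coordinates of a forward orbit of `ψ_{d,a,b}` which avoids both `0`
and `∞`. The recurrence is cleared of denominators; they cannot vanish because `z i ≠ 0`. -/
structure IsTorusOrbit (d : ℕ) (a b : K) (z : ℕ → K) : Prop where
  ne_zero : ∀ i, z i ≠ 0
  step : ∀ i, z (i + 1) * psiDenom d a b (z i) = z i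

namespace IsTorusOrbit

variable {d : ℕ} {a b : K} {z : ℕ → K} {n : ℕ}

theorem psiDenom_ne_zero (hz : IsTorusOrbit d a b z) (i : ℕ) : psiDenom d a b (z i) ≠ 0 :=
  right_ne_zero_of_mul (hz.step i ▸ hz.ne_zero i)

section AbsoluteValue

variable {S : Type*} [Field S] [LinearOrder S] (v : AbsoluteValue K S)

theorem abv_step (hz : IsTorusOrbit d a b z) (i : ℕ) :
    v (z (i + 1)) * v (psiDenom d a b (z i)) = v (z i) := by
  rw [← map_mul, hz.step]

theorem abv_lead_step (hz : IsTorusOrbit d a b z) (i : ℕ) :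
    v (a * z (i + 1) ^ d) * v (psiDenom d a b (z i)) ^ d = v (a * z i ^ d) := by
  rw [← map_pow, ← map_mul, lead_mul_psiDenom_pow (hz.step i)]

variable [IsStrictOrderedRing S]

theorem abv_lead_succ_le (hz : IsTorusOrbit d a b z) {i : ℕ} (hi : 1 ≤ v (psiDenom d a b (z i))) :
    v (a * z (i + 1) ^ d) ≤ v (a * z i ^ d) :=
  (le_mul_of_one_le_right (v.nonneg _) (one_le_pow₀ hi)).trans_eq (hz.abv_lead_step v i)

theorem abv_psiDenom_eq_one_of_trap (hz : IsTorusOrbit d a b z) (hper : Function.Periodic z n)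
    (hn : 0 < n) {T : ℕ → Prop} (enter : ∀ i, 1 < v (psiDenom d a b (z i)) → T (i + 1))
    (one_le : ∀ i, T i → 1 ≤ v (psiDenom d a b (z i))) (stay : ∀ i, T i → T (i + 1)) (i : ℕ) :
    v (psiDenom d a b (z i)) = 1 := by
  have hdich : (∀ j, v (psiDenom d a b (z j)) ≤ 1) ∨ ∀ j, 1 ≤ v (psiDenom d a b (z j)) := by
    by_contra! ⟨⟨i, hi⟩, j, hj⟩
    have htrap : T (j + (i + 1) * n) :=
      Nat.le_induction (m := i + 1) (P := fun k _ => T k) (enter i hi) (fun k _ => stay k) _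
        ((Nat.le_mul_of_pos_right _ hn).trans (Nat.le_add_left _ _))
    exact hj.not_ge (hper.nat_mul (i + 1) j ▸ one_le _ htrap)
  have hvper : Function.Periodic (fun j => v (z j)) n := hper.comp v
  have hsame : v (z (i + 1)) = v (z i) := by
    rcases hdich with hle | hge
    · refine eq_of_monotone_of_periodic (monotone_nat_of_le_succ fun j => ?_) hvper hn i
      exact hz.abv_step v j ▸ mul_le_of_le_one_right (v.nonneg _) (hle j)
    · refine eq_of_monotone_of_periodic (α := Sᵒᵈ) (f := fun j => v (z j))
        (monotone_nat_of_le_succ fun j => ?_) hvper hn i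
      exact (le_mul_of_one_le_right (v.nonneg _) (hge j)).trans_eq (hz.abv_step v j)
  exact mul_left_cancel₀ (v.ne_zero (hz.ne_zero _)) <| by rw [hz.abv_step, mul_one, hsame]

theorem abv_psiDenom_eq_one_of_isNonarchimedean (hz : IsTorusOrbit d a b z)
    (hper : Function.Periodic z n) (hn : 0 < n) (hv : IsNonarchimedean v) (hd : 2 ≤ d)
    (hb : 1 ≤ v b) (i : ℕ) : v (psiDenom d a b (z i)) = 1 := by
  have one_le : ∀ i, v (a * z i ^ d) < v b → 1 ≤ v (psiDenom d a b (z i)) := fun i hi =>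
    hb.trans_eq (hv.add_eq_right_of_lt hi).symm
  refine hz.abv_psiDenom_eq_one_of_trap v hper hn (T := fun i => v (a * z i ^ d) < v b)
    (fun i hi => ?_) one_le (fun i hi => (hz.abv_lead_succ_le v (one_le i hi)).trans_lt hi) i
  have hpow : 0 < v (psiDenom d a b (z i)) ^ d := pow_pos (one_pos.trans hi) d
  refine lt_of_mul_lt_mul_of_nonneg_right ?_ hpow.le
  rw [hz.abv_lead_step]
  rcases le_or_gt (v (a * z i ^ d)) (v b) with hsmall | hlarge
  · exact hsmall.trans_lt
      (lt_mul_of_one_lt_right (one_pos.trans_le hb) (one_lt_pow₀ hi (by lia)))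
  · have hy : v (psiDenom d a b (z i)) = v (a * z i ^ d) := hv.add_eq_left_of_lt hlarge
    calc v (a * z i ^ d) < v (a * z i ^ d) ^ d := lt_self_pow₀ (hy ▸ hi) (by lia)
      _ = v (psiDenom d a b (z i)) ^ d := by rw [hy]
      _ ≤ v b * v (psiDenom d a b (z i)) ^ d := le_mul_of_one_le_left hpow.le hb

end AbsoluteValue

theorem abs_psiDenom_eq_one [LinearOrder K] [IsStrictOrderedRing K] (hz : IsTorusOrbit d a b z)
    (hper : Function.Periodic z n) (hn : 0 < n) (hd : 3 ≤ d) (hb : 1 ≤ |b|)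
    (hgap : ∀ i, |psiDenom d a b (z i)| ≤ 1 / 2 ∨ |psiDenom d a b (z i)| = 1 ∨
      2 ≤ |psiDenom d a b (z i)|) (i : ℕ) : |psiDenom d a b (z i)| = 1 := by
  have one_le : ∀ i, |a * z i ^ d| < |b| / 2 → 1 ≤ |psiDenom d a b (z i)| := by
    intro i hi
    have htri : |b| ≤ |psiDenom d a b (z i)| + |a * z i ^ d| := by
      simpa [psiDenom] using abs_sub (psiDenom d a b (z i)) (a * z i ^ d)
    rcases hgap i with h | h | h <;> linarith
  refine hz.abv_psiDenom_eq_one_of_trap AbsoluteValue.abs hper hn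
    (T := fun i => |a * z i ^ d| < |b| / 2) (fun i hi => ?_) one_le
    (fun i hi => (hz.abv_lead_succ_le AbsoluteValue.abs (one_le i hi)).trans_lt hi) i
  replace hi : 1 < |psiDenom d a b (z i)| := hi
  have hlead : |a * z (i + 1) ^ d| * |psiDenom d a b (z i)| ^ d = |a * z i ^ d| :=
    hz.abv_lead_step AbsoluteValue.abs i
  have htri : |a * z i ^ d| ≤ |psiDenom d a b (z i)| + |b| := by
    simpa [psiDenom] using abs_sub (psiDenom d a b (z i)) b
  set Y := |psiDenom d a b (z i)|
  have hY : 2 ≤ Y := by rcases hgap i with h | h | h <;> linarith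
  have hYd : 4 * Y ≤ Y ^ d :=
    calc 4 * Y ≤ Y ^ 2 * Y := by gcongr; nlinarith
      _ = Y ^ 3 := by ring
      _ ≤ Y ^ d := pow_le_pow_right₀ hi.le hd
  by_contra! hlarge
  have : |b| / 2 * (4 * Y) ≤ Y + |b| :=
    calc |b| / 2 * (4 * Y) ≤ |a * z (i + 1) ^ d| * Y ^ d := by gcongr
      _ = |a * z i ^ d| := hlead
      _ ≤ Y + |b| := htri
  nlinarith

end IsTorusOrbit

end Denominator

section PrimePowers

theorem eq_one_or_eq_one_of_coprime_of_mul_eq_prime_pow {p e m n : ℕ} (hp : p.Prime)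
    (hmn : m.Coprime n) (h : m * n = p ^ e) : m = 1 ∨ n = 1 := by
  rcases Nat.coprime_or_dvd_of_prime hp m with hpm | hpm
  · exact Or.inl ((hpm.symm.pow_right e).eq_one_of_dvd (Dvd.intro _ h))
  · have hpn : n.Coprime p := (hmn.coprime_dvd_left hpm).symm
    exact Or.inr ((hpn.pow_right e).eq_one_of_dvd (Dvd.intro_left _ h))

theorem exists_den_eq_pow_of_padicNorm_le_one {p : ℕ} {x : ℚ}
    (h : ∀ q : ℕ, q.Prime → q ≠ p → padicNorm q x ≤ 1) : ∃ k : ℕ, x.den = p ^ k := by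
  refine ⟨_, Nat.eq_prime_pow_of_unique_prime_dvd x.den_nz fun {q} hq hqden => ?_⟩
  by_contra hqp
  have := Fact.mk hq
  have hnum : padicNorm q x.num < 1 := by
    rw [← Rat.mul_den_eq_num, padicNorm.mul]
    exact mul_lt_one_of_nonneg_of_lt_one_right (h q hq hqp) (padicNorm.nonneg _)
      ((padicNorm.nat_lt_one_iff _).2 hqden)
  have hqnum : q ∣ x.num.natAbs := Int.natCast_dvd.1 ((padicNorm.int_lt_one_iff _).1 hnum)
  exact hq.ne_one (Nat.eq_one_of_dvd_coprimes x.reduced hqnum hqden)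

theorem exists_abs_eq_zpow_of_padicNorm_eq_one {p : ℕ} (hp : p ≠ 0) {x : ℚ} (hx : x ≠ 0)
    (h : ∀ q : ℕ, q.Prime → q ≠ p → padicNorm q x = 1) : ∃ s : ℤ, |x| = (p : ℚ) ^ s := by
  obtain ⟨k, hk⟩ := exists_den_eq_pow_of_padicNorm_le_one fun q hq hqp => (h q hq hqp).le
  obtain ⟨l, hl⟩ := exists_den_eq_pow_of_padicNorm_le_one (p := p) (x := x⁻¹)
    fun q hq hqp => by
      have := Fact.mk hq
      rw [← one_div, padicNorm.div, padicNorm.one, h q hq hqp, div_one]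
  rw [Rat.den_inv_of_ne_zero hx] at hl
  refine ⟨l - k, ?_⟩
  rw [Rat.abs_def, hl, hk, Rat.divInt_eq_div, zpow_sub₀ (mod_cast hp)]
  push_cast
  simp only [zpow_natCast]

theorem zpow_le_half_or_eq_one_or_two_le {K : Type*} [Field K] [LinearOrder K]
    [IsStrictOrderedRing K] {x : K} (hx : 2 ≤ x) (s : ℤ) :
    x ^ s ≤ 1 / 2 ∨ x ^ s = 1 ∨ 2 ≤ x ^ s := by
  have one_le : 1 ≤ x := one_le_two.trans hx
  rcases lt_trichotomy s 0 with hs | rfl | hs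
  · left
    calc x ^ s ≤ x ^ (-1 : ℤ) := zpow_le_zpow_right₀ one_le (by lia)
      _ = 1 / x := by rw [zpow_neg_one, one_div]
      _ ≤ 1 / 2 := by gcongr
  · exact Or.inr (Or.inl (zpow_zero x))
  · right; right
    calc 2 ≤ x ^ (1 : ℤ) := by rwa [zpow_one]
      _ ≤ x ^ s := zpow_le_zpow_right₀ one_le (by lia)

theorem IsTorusOrbit.abs_psiDenom_eq_one_of_natAbs_eq_prime_pow {p : ℕ} (hp : p.Prime) {e d : ℕ}
    (hd : 3 ≤ d) {a : ℚ} {b : ℤ} (hb : b.natAbs = p ^ e) {z : ℕ → ℚ} {n : ℕ}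
    (hz : IsTorusOrbit d a b z) (hper : Function.Periodic z n) (hn : 0 < n) (i : ℕ) :
    |psiDenom d a b (z i)| = 1 := by
  have hunit (q : ℕ) (hq : q.Prime) (hqp : q ≠ p) (i : ℕ) :
      padicNorm q (psiDenom d a b (z i)) = 1 := by
    have := Fact.mk hq
    have hqb : padicNorm q b = 1 := (padicNorm.int_eq_one_iff b).2 fun hdvd =>
      hqp ((Nat.prime_dvd_prime_iff_eq hq hp).1
        (hq.dvd_of_dvd_pow (hb ▸ Int.natCast_dvd.1 hdvd)))
    exact hz.abv_psiDenom_eq_one_of_isNonarchimedean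
      (IsAbsoluteValue.toAbsoluteValue (padicNorm q)) hper hn
      (fun _ _ => padicNorm.nonarchimedean) (by lia) hqb.ge i
  have hb1 : 1 ≤ |(b : ℚ)| := by
    have hb0 : b ≠ 0 := Int.natAbs_ne_zero.1 (hb ▸ pow_ne_zero e hp.ne_zero)
    exact_mod_cast Int.one_le_abs hb0
  refine hz.abs_psiDenom_eq_one hper hn hd hb1 (fun i => ?_) i
  obtain ⟨s, hs⟩ := exists_abs_eq_zpow_of_padicNorm_eq_one hp.ne_zero (hz.psiDenom_ne_zero i)
    fun q hq hqp => hunit q hq hqp i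
  exact hs ▸ zpow_le_half_or_eq_one_or_two_le (mod_cast hp.two_le) s

end PrimePowers

section Preimages

theorem exists_reduced_system {b c N v : ℤ} {D : ℕ} (hcop : IsCoprime N v)
    (hv : v ≠ 0) (hb : b ≠ 0) (h : v ^ D * (N - b * v) = (c - b) * N ^ (D + 1)) :
    ∃ M k : ℤ, b = M * N ∧ 1 - M * v = k * N ^ D ∧ c - M * N = k * v ^ D := by
  have hNb : N ∣ b := by
    have hdvd : N ∣ b * v ^ (D + 1) := ⟨v ^ D - (c - b) * N ^ D, by linear_combination -h⟩
    exact hcop.pow_right.dvd_of_dvd_mul_right hdvd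
  obtain ⟨M, rfl⟩ := hNb
  have hN : N ≠ 0 := left_ne_zero_of_mul hb
  have hred : v ^ D * (1 - M * v) = (c - M * N) * N ^ D :=
    mul_left_cancel₀ hN (by linear_combination h)
  have hvD : v ^ D ∣ (c - M * N) * N ^ D := Dvd.intro _ hred
  obtain ⟨k, hk⟩ := hcop.symm.pow.dvd_of_dvd_mul_right hvD
  refine ⟨M, k, mul_comm N M, mul_left_cancel₀ (pow_ne_zero D hv) ?_, by rw [hk, mul_comm]⟩
  rw [hred, hk, mul_assoc]

theorem eq_of_reduced_system_of_abs_num_eq_one {c N v M k : ℤ} {D : ℕ} (hD : 2 ≤ D)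
    (hv : 0 < v) (hM : M ≠ 0) (hc : |c| ≤ 1) (hN : |N| = 1) (h₁ : 1 - M * v = k * N ^ D)
    (h₂ : c - M * N = k * v ^ D) : v = 1 ∧ N = c := by
  have hM1 : 1 ≤ |M| := Int.one_le_abs hM
  have hlower : |M| * v - 1 ≤ |k| := by
    have hk : |k| = |M * v - 1| := by
      rw [abs_sub_comm, h₁, abs_mul, abs_pow, hN, one_pow, mul_one]
    rw [hk, ← abs_of_pos hv, ← abs_mul, abs_of_pos hv]
    simpa using abs_sub_abs_le_abs_sub (M * v) 1
  have hupper : |k| * v ^ D ≤ |M| + 1 := by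
    have := abs_sub c (M * N)
    rw [h₂, abs_mul, abs_mul, hN, abs_of_pos (pow_pos hv D)] at this
    linarith
  obtain rfl : v = 1 := by
    by_contra hv1
    have hv2 : 2 ≤ v := by lia
    have hvD : 4 ≤ v ^ D := (by nlinarith : 4 ≤ v ^ 2).trans (pow_le_pow_right₀ hv hD)
    have hk4 : |k| * 4 ≤ |k| * v ^ D := by gcongr
    have hM2 : |M| * 2 ≤ |M| * v := by gcongr
    lia
  refine ⟨rfl, ?_⟩
  rw [one_pow, mul_one] at h₂
  rw [mul_one] at h₁
  have hpow : N ^ D = 1 ∨ N ^ D = -1 := eq_or_eq_neg_of_abs_eq (by rw [abs_pow, hN, one_pow])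
  rw [abs_le] at hc
  rcases eq_or_eq_neg_of_abs_eq hN with rfl | rfl <;> rcases hpow with h | h <;>
    rw [h] at h₁ <;> lia

theorem eq_zero_of_reduced_system_of_abs_cofactor_eq_one {c N v M k : ℤ} {D : ℕ} (hD : 2 ≤ D)
    (hv : 0 < v) (hc : |c| ≤ 1) (hM : |M| = 1) (hN : 2 ≤ |N|) (h₁ : 1 - M * v = k * N ^ D)
    (h₂ : c - M * N = k * v ^ D) : k = 0 := by
  by_contra hk
  have hk1 : 1 ≤ |k| := Int.one_le_abs hk
  have hNv : |N| ^ 2 ≤ 1 + v :=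
    calc |N| ^ 2 ≤ |N| ^ D := pow_le_pow_right₀ (by lia) hD
      _ ≤ |k| * |N| ^ D := le_mul_of_one_le_left (by positivity) hk1
      _ = |1 - M * v| := by rw [h₁, abs_mul, abs_pow]
      _ ≤ |1| + |M * v| := abs_sub _ _
      _ = 1 + v := by rw [abs_mul, hM, abs_of_pos hv, abs_one, one_mul]
  have hvN : v ^ 2 ≤ 1 + |N| :=
    calc v ^ 2 ≤ v ^ D := pow_le_pow_right₀ hv hD
      _ ≤ |k| * v ^ D := le_mul_of_one_le_left (by positivity) hk1
      _ = |c - M * N| := by rw [h₂, abs_mul, abs_of_pos (pow_pos hv D)]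
      _ ≤ |c| + |M * N| := abs_sub _ _
      _ ≤ 1 + |N| := by rw [abs_mul, hM, one_mul]; gcongr
  nlinarith

theorem eq_intCast_of_sub_eq_sub_mul_pow {p : ℕ} (hp : p.Prime) {d e : ℕ} (hd : 3 ≤ d) {b c : ℤ}
    (hb : b.natAbs = p ^ e) (hc : |c| ≤ 1) (hcb : c ≠ b) {y : ℚ}
    (h : y - b = (c - b) * y ^ d) : y = c := by
  obtain ⟨D, rfl⟩ : ∃ D, d = D + 1 := ⟨d - 1, by lia⟩
  have hD : 2 ≤ D := by lia
  have hb0 : b ≠ 0 := Int.natAbs_ne_zero.1 (hb ▸ pow_ne_zero e hp.ne_zero)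
  have hden : (0 : ℤ) < y.den := mod_cast y.den_pos
  have hcop : IsCoprime y.num y.den := Rat.isCoprime_num_den y
  have hcleared : (y.den : ℤ) ^ D * (y.num - b * y.den) = (c - b) * y.num ^ (D + 1) := by
    have : (y.den : ℚ) ^ D * (y.num - b * y.den) = (c - b) * y.num ^ (D + 1) := by
      rw [← Rat.mul_den_eq_num y]
      linear_combination (y.den : ℚ) ^ (D + 1) * h
    exact_mod_cast this
  obtain ⟨M, k, rfl, h₁, h₂⟩ := exists_reduced_system hcop hden.ne' hb0 hcleared
  have hMN : IsCoprime M y.num := by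
    obtain ⟨D, rfl⟩ : ∃ D', D = D' + 1 := ⟨D - 1, by lia⟩
    exact ⟨y.den, k * y.num ^ D, by linear_combination -h₁⟩
  have hnum : |y.num| = 1 := by
    by_contra hnum
    have hM : |M| = 1 := by
      rw [Int.abs_eq_natAbs] at hnum ⊢
      exact (eq_one_or_eq_one_of_coprime_of_mul_eq_prime_pow hp
        (Int.isCoprime_iff_gcd_eq_one.1 hMN) (by rw [← Int.natAbs_mul, hb])).resolve_right
        (mod_cast hnum) ▸ rfl
    have hnum2 : 2 ≤ |y.num| := by
      have := Int.one_le_abs (right_ne_zero_of_mul hb0)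
      lia
    have hk := eq_zero_of_reduced_system_of_abs_cofactor_eq_one hD hden hc hM hnum2 h₁ h₂
    exact hcb (sub_eq_zero.1 (by rw [h₂, hk, zero_mul]))
  obtain ⟨hden1, hnumc⟩ :=
    eq_of_reduced_system_of_abs_num_eq_one hD hden (left_ne_zero_of_mul hb0) hc hnum h₁ h₂
  rw [← hnumc, ← Rat.mul_den_eq_num y, ← Int.cast_natCast, hden1, Int.cast_one, mul_one]

end Preimages

section Candidates

theorem encard_pair_le_two {α : Type*} (x y : α) : ({x, y} : Set α).encard ≤ 2 :=
  (Set.encard_insert_le {y} x).trans_eq (by rw [Set.encard_singleton, one_add_one_eq_two])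

/-- The nonzero affine points at which the denominator of `ψ_{d,a,b}` takes the value `c`. -/
def psiFiber (d : ℕ) (a b c : ℚ) : Set ℚ := {z | z ≠ 0 ∧ psiDenom d a b z = c}

/-- The points `∞`, `0` and those whose denominator is `0`, `1` or `-1`; it contains all
preperiodic points when `b` is up to sign a prime power. -/
def psiCandidates (d : ℕ) (a b : ℚ) : Set (Option ℚ) :=
  {none, some 0} ∪ some '' (psiFiber d a b 0 ∪ (psiFiber d a b 1 ∪ psiFiber d a b (-1)))

variable {d : ℕ} {a b : ℚ}

theorem some_mem_psiCandidates {z : ℚ} :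
    some z ∈ psiCandidates d a b ↔ z = 0 ∨ ∃ c : ℤ, |c| ≤ 1 ∧ psiDenom d a b z = c := by
  have hc (c : ℤ) : |c| ≤ 1 ↔ c = 0 ∨ c = 1 ∨ c = -1 := by rw [abs_le]; lia
  by_cases hz : z = 0 <;> simp [psiCandidates, psiFiber, hc, hz, or_and_right, exists_or]

theorem psiFiber_subset_pair (hd : d ≠ 0) (ha : a ≠ 0) {c r : ℚ} (hr : r ∈ psiFiber d a b c) :
    psiFiber d a b c ⊆ {r, -r} := by
  intro z hz
  have hpow : z ^ d = r ^ d := mul_left_cancel₀ ha (add_right_cancel (hz.2.trans hr.2.symm))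
  rcases pow_eq_pow_iff_cases.1 hpow with h | h | h
  · exact absurd h hd
  · exact Or.inl h
  · exact Or.inr h.1

theorem encard_psiFiber_le_two (hd : d ≠ 0) (ha : a ≠ 0) (c : ℚ) :
    (psiFiber d a b c).encard ≤ 2 := by
  rcases (psiFiber d a b c).eq_empty_or_nonempty with h | ⟨r, hr⟩
  · simp [h]
  · exact (Set.encard_le_encard (psiFiber_subset_pair hd ha hr)).trans (encard_pair_le_two r (-r))

theorem encard_psiFiber_le_one_of_odd (hd : Odd d) (ha : a ≠ 0) (c : ℚ) :
    (psiFiber d a b c).encard ≤ 1 :=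
  Set.encard_le_one_iff.2 fun _ _ hx hy => hd.strictMono_pow.injective <|
    mul_left_cancel₀ ha (add_right_cancel (hx.2.trans hy.2.symm))

theorem eq_zero_of_sq_eq_intCast_sq_sub_one {x : ℚ} {b : ℤ} (h : x ^ 2 = (b : ℚ) ^ 2 - 1) :
    x = 0 := by
  obtain ⟨r, hr⟩ : IsSquare (b ^ 2 - 1) := by
    rw [← Rat.isSquare_intCast_iff]
    exact ⟨x, by push_cast; rw [← h, sq]⟩
  have hfactor : (|b| - |r|) * (|b| + |r|) = 1 := by
    linear_combination sq_abs b - sq_abs r + hr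
  have hr0 : |r| = 0 := by
    have := abs_nonneg r
    have := abs_nonneg b
    have := Int.eq_one_or_neg_one_of_mul_eq_one' hfactor
    lia
  have : x ^ 2 = 0 := by
    rw [h]
    exact_mod_cast hr.trans (by rw [abs_eq_zero.1 hr0, mul_zero])
  exact pow_eq_zero_iff two_ne_zero |>.1 this

theorem psiFiber_one_eq_empty_or_psiFiber_neg_one_eq_empty (hd : Even d) (ha : a ≠ 0) (b : ℤ) :
    psiFiber d a b 1 = ∅ ∨ psiFiber d a b (-1) = ∅ := by
  by_contra! ⟨⟨x, hx, hx1⟩, y, hy, hy1⟩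
  obtain ⟨m, rfl⟩ := hd
  have hsq : (a * (x * y) ^ m) ^ 2 = (b : ℚ) ^ 2 - 1 := by
    rw [psiDenom] at hx1 hy1
    linear_combination (a * y ^ (m + m)) * hx1 + (1 - b) * hy1
  exact mul_ne_zero ha (pow_ne_zero m (mul_ne_zero hx hy))
    (eq_zero_of_sq_eq_intCast_sq_sub_one hsq)

theorem encard_psiFiber_one_union_neg_one_le_two (hd : d ≠ 0) (ha : a ≠ 0) (b : ℤ) :
    (psiFiber d a b 1 ∪ psiFiber d a b (-1)).encard ≤ 2 := by
  rcases Nat.even_or_odd d with heven | hodd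
  · rcases psiFiber_one_eq_empty_or_psiFiber_neg_one_eq_empty heven ha b with h | h
    · rw [h, Set.empty_union]
      exact encard_psiFiber_le_two hd ha _
    · rw [h, Set.union_empty]
      exact encard_psiFiber_le_two hd ha _
  · calc (psiFiber d a b 1 ∪ psiFiber d a b (-1)).encard
        ≤ (psiFiber d a b 1).encard + (psiFiber d a b (-1)).encard := Set.encard_union_le _ _
      _ ≤ 1 + 1 := by gcongr <;> exact encard_psiFiber_le_one_of_odd hodd ha _
      _ = 2 := one_add_one_eq_two

theorem encard_psiCandidates_le_six (hd : d ≠ 0) (ha : a ≠ 0) (b : ℤ) :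
    (psiCandidates d a b).encard ≤ 6 := by
  calc (psiCandidates d a b).encard
      ≤ 2 + (psiFiber d a b 0 ∪ (psiFiber d a b 1 ∪ psiFiber d a b (-1))).encard :=
        (Set.encard_union_le _ _).trans
          (add_le_add (encard_pair_le_two _ _) (Set.encard_image_le _ _))
    _ ≤ 2 + (2 + 2) := by
        gcongr
        exact (Set.encard_union_le _ _).trans (add_le_add (encard_psiFiber_le_two hd ha 0)
          (encard_psiFiber_one_union_neg_one_le_two hd ha b))
    _ = 6 := by norm_num

end Candidates

section Dynamics

theorem psi_some_of_psiDenom_ne_zero {d : ℕ} {a b z : ℚ} (h : psiDenom d a b z ≠ 0) :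
    psi d a b (some z) = some (z / psiDenom d a b z) :=
  if_neg h

theorem mul_psiDenom_of_psi_some_eq_some {d : ℕ} {a b z z' : ℚ}
    (h : psi d a b (some z) = some z') : z' * psiDenom d a b z = z := by
  by_cases hy : psiDenom d a b z = 0
  · simp [psi, show a * z ^ d + b = 0 from hy] at h
  · rw [psi_some_of_psiDenom_ne_zero hy, Option.some.injEq] at h
    rw [← h, div_mul_cancel₀ _ hy]

theorem mapsTo_psi_none_zero (d : ℕ) (a b : ℚ) :
    Set.MapsTo (psi d a b) {none, some 0} {none, some 0} := by
  rintro P (rfl | rfl)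
  · exact Or.inr rfl
  · rw [psi]
    split_ifs <;> simp

theorem exists_isTorusOrbit_of_isPeriodicPt {d : ℕ} {a b : ℚ} {P : Option ℚ} {n : ℕ}
    (hP : Function.IsPeriodicPt (psi d a b) n P) (hn : 0 < n)
    (hP0 : P ∉ ({none, some 0} : Set (Option ℚ))) :
    ∃ z : ℕ → ℚ, P = some (z 0) ∧ IsTorusOrbit d a b z ∧ Function.Periodic z n := by
  have hmem (i : ℕ) : (psi d a b)^[i] P ∉ ({none, some 0} : Set (Option ℚ)) := fun hi =>
    hP0 (mem_of_iterate_mem_of_isPeriodicPt (mapsTo_psi_none_zero d a b) hP hn hi)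
  have haffine (i : ℕ) : ∃ z, (psi d a b)^[i] P = some z :=
    Option.ne_none_iff_exists'.1 fun h => hmem i (Or.inl h)
  choose z hz using haffine
  refine ⟨z, hz 0, ⟨fun i h => hmem i (Or.inr (by rw [hz, h]; rfl)), fun i => ?_⟩, fun i => ?_⟩
  · apply mul_psiDenom_of_psi_some_eq_some
    rw [← hz, ← hz, Function.iterate_succ_apply']
  · apply Option.some.inj
    rw [← hz, ← hz, Function.iterate_add_apply, hP.eq]

variable {p : ℕ} (hp : p.Prime) {d e : ℕ} (hd : 3 ≤ d) {a : ℚ} {b : ℤ} (hb : b.natAbs = p ^ e)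

include hp hd hb

theorem mem_psiCandidates_of_isPeriodicPt {P : Option ℚ} {n : ℕ}
    (hP : Function.IsPeriodicPt (psi d a b) n P) (hn : 0 < n) : P ∈ psiCandidates d a b := by
  by_cases hP0 : P ∈ ({none, some 0} : Set (Option ℚ))
  · exact Or.inl hP0
  obtain ⟨z, rfl, hz, hper⟩ := exists_isTorusOrbit_of_isPeriodicPt hP hn hP0
  refine some_mem_psiCandidates.2 (Or.inr ?_)
  rcases eq_or_eq_neg_of_abs_eq
    (hz.abs_psiDenom_eq_one_of_natAbs_eq_prime_pow hp hd hb hper hn 0) with h | h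
  · exact ⟨1, by simp, by simpa using h⟩
  · exact ⟨-1, by simp, by simpa using h⟩

theorem mem_psiCandidates_of_psi_mem (ha : a ≠ 0) {P : Option ℚ}
    (hP : psi d a b P ∈ psiCandidates d a b) : P ∈ psiCandidates d a b := by
  rcases P with - | z
  · exact Or.inl (Or.inl rfl)
  rw [some_mem_psiCandidates]
  by_cases hy : psiDenom d a b z = 0
  · exact Or.inr ⟨0, by simp, by simpa using hy⟩
  rw [psi_some_of_psiDenom_ne_zero hy, some_mem_psiCandidates] at hP
  set z' := z / psiDenom d a b z
  have hstep : z' * psiDenom d a b z = z := div_mul_cancel₀ z hy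
  refine or_iff_not_imp_left.2 fun hz => ?_
  have hz'0 : z' ≠ 0 := div_ne_zero hz hy
  obtain ⟨c, hc, hyc⟩ := hP.resolve_left hz'0
  have hlead : a * z' ^ d = c - b := eq_sub_of_add_eq hyc
  have hcb : c ≠ b := fun h =>
    mul_ne_zero ha (pow_ne_zero d hz'0) (by rw [hlead, h, sub_self])
  refine ⟨c, hc, eq_intCast_of_sub_eq_sub_mul_pow hp hd hb hc hcb ?_⟩
  rw [← hlead, lead_mul_psiDenom_pow hstep, psiDenom, add_sub_cancel_right]

end Dynamics

/-- Let `p` be a prime, `d ≥ 3`, `a` a nonzero rational, and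
`b = σ·p^e` with `σ ∈ {1,−1}` and `e ≥ 0`. Then `ψ_{d,a,b}` has at most `6`
rational preperiodic points. -/
theorem preper_card_le_six_deg_ge_three
    (p : ℕ) (hp : p.Prime) (d : ℕ) (hd : 3 ≤ d) (a : ℚ) (ha : a ≠ 0)
    (σ : ℚ) (hσ : σ = 1 ∨ σ = -1) (e : ℕ) (b : ℚ) (hb : b = σ * (p : ℚ) ^ e) :
    {P : Option ℚ | ∃ m n : ℕ, m < n ∧ (psi d a b)^[m] P = (psi d a b)^[n] P}.encard ≤ 6 := by
  obtain ⟨c, hc, rfl⟩ : ∃ c : ℤ, c.natAbs = p ^ e ∧ b = c := by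
    rcases hσ with rfl | rfl
    · exact ⟨(p : ℤ) ^ e, by simp [Int.natAbs_pow], by simp [hb]⟩
    · exact ⟨-(p : ℤ) ^ e, by simp [Int.natAbs_pow], by simp [hb]⟩
  refine (Set.encard_le_encard ?_).trans (encard_psiCandidates_le_six (d := d) (by lia) ha c)
  rintro P ⟨m, n, hmn, h⟩
  have hperiodic : Function.IsPeriodicPt (psi d a c) (n - m) ((psi d a c)^[m] P) := by
    rw [Function.IsPeriodicPt, Function.IsFixedPt, ← Function.iterate_add_apply,
      Nat.sub_add_cancel hmn.le, h]
  exact mem_of_iterate_mem (fun _ => mem_psiCandidates_of_psi_mem hp hd hc ha)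
    (mem_psiCandidates_of_isPeriodicPt hp hd hc hperiodic (Nat.sub_pos_of_lt hmn))
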